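/- Let k ≥ 1 and let K = M·(1+2+⋯+k) + 1 = M·k(k+1)/2 + 1 for some M ∈ ℕ. Then the stabiliser in SL(k,ℂ) of the point p_k ⊗ e_1^{⊗K} ∈ ∧^k(Sym^{≤k}ℂ^k) ⊗ (ℂ^k)^{⊗K} is exactly 𝕌_k. -/

import Mathlib

open scoped BigOperators

namespace JetPaper

/-- Monomials in `n` variables of degree between `1` and `k`:
these index the standard basis of `Sym^{≤k}ℂ^n = ⊕_{l=1}^k Sym^l ℂ^n`. -/
def Mon (n k : ℕ) : Type := {m : Fin n → ℕ // 0 < ∑ i, m i ∧ ∑ i, m i ≤ k}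

noncomputable instance (n k : ℕ) : Fintype (Mon n k) :=
  Fintype.ofInjective
    (fun m : Mon n k => (fun i => (⟨m.1 i, Nat.lt_succ_of_le
        ((Finset.single_le_sum (fun _ _ => Nat.zero_le _) (Finset.mem_univ i)).trans
          m.2.2)⟩ : Fin (k + 1))))
    (fun _ _ h => Subtype.ext (funext fun i => congrArg Fin.val (congrFun h i)))

/-- The matrix coefficient of the `GL(n)`-action on `Sym^{≤k}ℂ^n` induced by the standard
action on `ℂ^n` (`g·e_i = ∑_j g_{ji} e_j`), in the monomial basis:
`symMat g m m'` is the coefficient of the monomial `m` in the image of the monomial `m'`. -/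
noncomputable def symMat {n k : ℕ} (g : Matrix (Fin n) (Fin n) ℂ) (m m' : Mon n k) : ℂ :=
  MvPolynomial.coeff (Finsupp.equivFunOnFinite.symm m.1)
    (∏ i : Fin n, (∑ j : Fin n, g j i • MvPolynomial.X j) ^ (m'.1 i))

/-- The induced action of `g ∈ GL(n)` on `(Sym^{≤k}ℂ^n)^{⊗k}`, in coordinates.
Elements of the `k`-th tensor power of `Sym^{≤k}ℂ^n` are recorded by their coordinates
in the basis indexed by `k`-tuples of monomials; `⋀^k(Sym^{≤k}ℂ^n)` is realised inside the
tensor power as the space of antisymmetric tensors. -/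
noncomputable def actV {n k : ℕ} (g : Matrix (Fin n) (Fin n) ℂ)
    (T : (Fin k → Mon n k) → ℂ) : (Fin k → Mon n k) → ℂ :=
  fun mf => ∑ mf' : Fin k → Mon n k, (∏ i, symMat g (mf i) (mf' i)) * T mf'

/-- The wedge product `v₁ ∧ ⋯ ∧ v_k` of `k` elements of `Sym^{≤k}ℂ^n`, realised as an
antisymmetric tensor in `(Sym^{≤k}ℂ^n)^{⊗k}` (in coordinates). -/
noncomputable def wedge {n k : ℕ} (v : Fin k → (Mon n k → ℂ)) : (Fin k → Mon n k) → ℂ :=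
  fun mf => ∑ σ : Equiv.Perm (Fin k), ((Equiv.Perm.sign σ : ℤ) : ℂ) * ∏ i, v (σ i) (mf i)

/-- The `j`-th coordinate polynomial of `φ(γ) ∈ Hom(ℂ^k, Sym^{≤k}ℂ^n)` for
`γ ∈ Hom(ℂ^k, ℂ^n)`: the sum over all `s ≥ 1` and all ordered `s`-tuples `(i₁,…,i_s)` of
positive integers with `i₁+⋯+i_s = j` of the product (in the symmetric algebra,
realised as the polynomial ring in `n` variables) of the `i₁`-th, …, `i_s`-th columns
of `γ`.  A tuple of length `s = l+1` is recorded as a function `a : Fin (l+1) → Fin k`,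
the value `a t` standing for the positive integer `(a t) + 1`. -/
noncomputable def colPoly {n k : ℕ} (γ : Matrix (Fin n) (Fin k) ℂ) (j : Fin k) :
    MvPolynomial (Fin n) ℂ :=
  ∑ l : Fin k, ∑ a : Fin (l.val + 1) → Fin k,
    if (∑ t, ((a t).val + 1)) = j.val + 1 then
      ∏ t, (∑ i : Fin n, γ i (a t) • MvPolynomial.X i)
    else 0

/-- The map `φ : Hom(ℂ^k,ℂ^n) → Hom(ℂ^k, Sym^{≤k}ℂ^n)` as a matrix in the monomial basis:
rows are indexed by monomials, columns by `Fin k`. -/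
noncomputable def phiMat {n k : ℕ} (γ : Matrix (Fin n) (Fin k) ℂ) :
    Matrix (Mon n k) (Fin k) ℂ :=
  fun m j => MvPolynomial.coeff (Finsupp.equivFunOnFinite.symm m.1) (colPoly γ j)

/-- `φ^{Proj}` at the level of vectors: the wedge `φ(γ)e₁ ∧ ⋯ ∧ φ(γ)e_k` of the columns of
`φ(γ)`, an element of `⋀^k(Sym^{≤k}ℂ^n)` in coordinates. -/
noncomputable def wedgePhi {n k : ℕ} (γ : Matrix (Fin n) (Fin k) ℂ) :
    (Fin k → Mon n k) → ℂ :=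
  wedge (fun j m => phiMat γ m j)

/-- The matrix of the reparametrization jet with parameters `α = (α₁,…,α_k)`
(`α_s` is recorded as `α ⟨s-1⟩`): the `(i,j)` entry is
`∑_{s₁+⋯+s_i = j, s_l ≥ 1} α_{s₁}⋯α_{s_i}` (rows and columns of `Fin k` represent
the integers `1,…,k`). -/
noncomputable def repMat (k : ℕ) (α : Fin k → ℂ) : Matrix (Fin k) (Fin k) ℂ :=
  fun i j => ∑ a : Fin (i.val + 1) → Fin k,
    if (∑ t, ((a t).val + 1)) = j.val + 1 then ∏ t, α (a t) else 0

/-- The reparametrization group `𝔾_k ⊂ GL(k,ℂ)`. -/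
def Gset (k : ℕ) : Set (Matrix (Fin k) (Fin k) ℂ) :=
  {g | ∃ α : Fin k → ℂ, (∀ i : Fin k, i.val = 0 → α i ≠ 0) ∧ g = repMat k α}

/-- The unipotent radical `𝕌_k ⊂ 𝔾_k`: the matrices `repMat k α` with `α₁ = 1`. -/
def Uset (k : ℕ) : Set (Matrix (Fin k) (Fin k) ℂ) :=
  {g | ∃ α : Fin k → ℂ, (∀ i : Fin k, i.val = 0 → α i = 1) ∧ g = repMat k α}

/-- The distinguished point
`p_k = e₁ ∧ (e₂ + e₁²) ∧ ⋯ ∧ (∑_{i₁+⋯+i_s = k} e_{i₁}⋯e_{i_s}) ∈ ⋀^k(Sym^{≤k}ℂ^k)`,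
i.e. the wedge of the columns of `φ(1)`. -/
noncomputable def pkVec (k : ℕ) : (Fin k → Mon k k) → ℂ :=
  wedgePhi (1 : Matrix (Fin k) (Fin k) ℂ)


/-- The representation space `W_{k,K} = ⋀^k(Sym^{≤k}ℂ^k) ⊗ (ℂ^k)^{⊗K}`, in coordinates:
the exterior power is realised inside `(Sym^{≤k}ℂ^k)^{⊗k}`. -/
abbrev Wspace (k K : ℕ) : Type := ((Fin k → Mon k k) × (Fin K → Fin k)) → ℂ

/-- The basis vector `e₁ ∈ ℂ^k` (indicator of the first coordinate). -/
def e1 (k : ℕ) : Fin k → ℂ := fun i => if (i : ℕ) = 0 then 1 else 0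

/-- The point `p_k ⊗ e₁^{⊗K} ∈ ⋀^k(Sym^{≤k}ℂ^k) ⊗ (ℂ^k)^{⊗K}`. -/
noncomputable def ptW (k K : ℕ) : Wspace k K :=
  fun x => pkVec k x.1 * ∏ j, e1 k (x.2 j)

/-- The natural action of `g ∈ GL(k,ℂ)` on `⋀^k(Sym^{≤k}ℂ^k) ⊗ (ℂ^k)^{⊗K}` (extension of
the standard action on `ℂ^k`), in coordinates. -/
noncomputable def actW {k K : ℕ} (g : Matrix (Fin k) (Fin k) ℂ) (T : Wspace k K) :
    Wspace k K :=
  fun x => ∑ y : (Fin k → Mon k k) × (Fin K → Fin k),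
    (∏ i, symMat g (x.1 i) (y.1 i)) * (∏ j, g (x.2 j) (y.2 j)) * T y


/-- generating polynomial -/
noncomputable def gp {A : Type*} [CommRing A] {k : ℕ} (β : Fin k → A) : Polynomial A :=
  ∑ s : Fin k, Polynomial.C (β s) * Polynomial.X ^ (s.val + 1)

lemma coeff_gp_pow {A : Type*} [CommRing A] {k : ℕ} (β : Fin k → A) (n N : ℕ) :
    ((gp β) ^ n).coeff N =
      ∑ a : Fin n → Fin k, if (∑ t, ((a t).val + 1)) = N then ∏ t, β (a t) else 0 := by
  unfold gp
  rw [Fintype.sum_pow, Polynomial.finsetSum_coeff]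
  refine Finset.sum_congr rfl fun a _ => ?_
  rw [Finset.prod_mul_distrib, Finset.prod_pow_eq_pow_sum, ← map_prod,
    Polynomial.coeff_C_mul_X_pow]
  simp only [eq_comm]

lemma coeff_gp_succ {A : Type*} [CommRing A] {k : ℕ} (β : Fin k → A) (j : Fin k) :
    (gp β).coeff (j.val + 1) = β j := by
  unfold gp
  rw [Polynomial.finsetSum_coeff]
  simp only [Polynomial.coeff_C_mul_X_pow]
  rw [Finset.sum_eq_single j]
  · simp
  · intro b _ hb
    rw [if_neg]
    intro h
    exact hb (Fin.ext (by omega))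
  · simp

lemma X_dvd_gp {A : Type*} [CommRing A] {k : ℕ} (β : Fin k → A) :
    (Polynomial.X : Polynomial A) ∣ gp β := by
  unfold gp
  refine Finset.dvd_sum fun s _ => ?_
  exact Dvd.dvd.mul_left (dvd_pow_self _ (Nat.succ_ne_zero _)) _

lemma gp_map {A B : Type*} [CommRing A] [CommRing B] {k : ℕ} (f : A →+* B) (β : Fin k → A) :
    (gp β).map f = gp (fun s => f (β s)) := by
  unfold gp
  simp [Polynomial.map_sum]

lemma coeff_gp_pow_lt {A : Type*} [CommRing A] {k : ℕ} (β : Fin k → A) {n N : ℕ} (h : N < n) :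
    ((gp β) ^ n).coeff N = 0 :=
  Polynomial.X_pow_dvd_iff.1 (pow_dvd_pow_of_dvd (X_dvd_gp β) n) N h

/-- linear form of a column -/
noncomputable def col {n k : ℕ} (γ : Matrix (Fin n) (Fin k) ℂ) (s : Fin k) :
    MvPolynomial (Fin n) ℂ := ∑ i : Fin n, γ i s • MvPolynomial.X i

lemma repMat_eq (k : ℕ) (α : Fin k → ℂ) (i j : Fin k) :
    repMat k α i j = ((gp α) ^ (i.val + 1)).coeff (j.val + 1) := by
  rw [coeff_gp_pow]; rfl

lemma colPoly_eq {n k : ℕ} (γ : Matrix (Fin n) (Fin k) ℂ) (j : Fin k) :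
    colPoly γ j = ∑ l : Fin k, ((gp (col γ)) ^ (l.val + 1)).coeff (j.val + 1) := by
  unfold colPoly
  refine Finset.sum_congr rfl fun l _ => ?_
  rw [coeff_gp_pow]; rfl

lemma col_one {k : ℕ} : col (1 : Matrix (Fin k) (Fin k) ℂ) = MvPolynomial.X := by
  funext s
  unfold col
  rw [Finset.sum_eq_single s]
  · simp
  · intro b _ hb; simp [Matrix.one_apply_ne hb]
  · simp

lemma colPoly_repMat {k : ℕ} (α : Fin k → ℂ) (j : Fin k) :
    colPoly (repMat k α) j
      = ∑ i : Fin k, MvPolynomial.C (repMat k α i j) * colPoly (1 : Matrix (Fin k) (Fin k) ℂ) i := by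
  classical
  set q : Polynomial (MvPolynomial (Fin k) ℂ) := gp (fun s => MvPolynomial.C (α s)) with hq
  have hqc : ∀ n N, (q ^ n).coeff N = MvPolynomial.C (((gp α) ^ n).coeff N) := by
    intro n N
    rw [hq, ← gp_map, ← Polynomial.map_pow, Polynomial.coeff_map]
  set pX : Polynomial (MvPolynomial (Fin k) ℂ) := gp MvPolynomial.X with hpX
  have hcong : (Polynomial.X : Polynomial (MvPolynomial (Fin k) ℂ)) ^ (k + 1) ∣
      gp (col (repMat k α)) - pX.comp q := by
    rw [Polynomial.X_pow_dvd_iff]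
    intro d hd
    have hcomp : pX.comp q = ∑ s : Fin k, Polynomial.C (MvPolynomial.X s) * q ^ (s.val + 1) := by
      rw [hpX, gp]
      simp only [Polynomial.comp, Polynomial.eval₂_finsetSum, Polynomial.eval₂_mul,
        Polynomial.eval₂_C, Polynomial.eval₂_X_pow]
    rw [Polynomial.coeff_sub, hcomp, Polynomial.finsetSum_coeff]
    simp only [Polynomial.coeff_C_mul, hqc]
    rcases d with _ | d
    · have h0 := coeff_gp_pow_lt (col (repMat k α)) (n := 1) (N := 0) (by omega)
      rw [pow_one] at h0
      rw [h0]
      simp [coeff_gp_pow_lt]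
    · have h1 := coeff_gp_succ (col (repMat k α)) ⟨d, by omega⟩
      simp only at h1
      rw [h1, col, sub_eq_zero]
      refine Finset.sum_congr rfl fun s _ => ?_
      rw [repMat_eq, MvPolynomial.smul_eq_C_mul, mul_comm]
  have hl : ∀ l : ℕ, ((gp (col (repMat k α))) ^ (l + 1)).coeff (j.val + 1)
      = ((pX ^ (l + 1)).comp q).coeff (j.val + 1) := by
    intro l
    have := hcong.trans (sub_dvd_pow_sub_pow _ _ (l + 1))
    rw [Polynomial.X_pow_dvd_iff] at this
    have := this (j.val + 1) (by omega)
    rw [Polynomial.coeff_sub, sub_eq_zero] at this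
    rw [this, Polynomial.pow_comp]
  have hl2 : ∀ l : ℕ, ((pX ^ (l + 1)).comp q).coeff (j.val + 1)
      = ∑ i : Fin k, MvPolynomial.C (repMat k α i j) * (pX ^ (l + 1)).coeff (i.val + 1) := by
    intro l
    set P := pX ^ (l + 1) with hP
    have h0 : P.coeff 0 = 0 := coeff_gp_pow_lt _ (by omega)
    rw [Polynomial.comp, Polynomial.eval₂_eq_sum_range' Polynomial.C
      (n := (P.natDegree + k + 2)) (by omega), Polynomial.finsetSum_coeff]
    simp only [Polynomial.coeff_C_mul, hqc]
    rw [← Finset.sum_subset (s₁ := Finset.range (k + 1))]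
    · rw [Finset.sum_range_succ', h0, zero_mul, add_zero, Finset.sum_range]
      refine Finset.sum_congr rfl fun i _ => ?_
      rw [repMat_eq, mul_comm]
    · intro x; simp only [Finset.mem_range]; omega
    · intro x _ hx
      rw [Finset.mem_range] at hx
      rw [coeff_gp_pow_lt α (by omega)]
      simp
  rw [colPoly_eq]
  simp only [hl, hl2]
  rw [Finset.sum_comm]
  refine Finset.sum_congr rfl fun i _ => ?_
  rw [colPoly_eq, Finset.mul_sum, col_one]

/-- restriction to the first axis -/
noncomputable def axis {k : ℕ} (z : Fin k) : MvPolynomial (Fin k) ℂ →ₐ[ℂ] Polynomial ℂ :=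
  MvPolynomial.aeval (fun i => if i = z then Polynomial.X else 0)

lemma axis_colPoly {k : ℕ} (z : Fin k) (γ : Matrix (Fin k) (Fin k) ℂ) (j : Fin k) :
    axis z (colPoly γ j) =
      ∑ l : Fin k, Polynomial.C (repMat k (γ z) l j) * Polynomial.X ^ (l.val + 1) := by
  unfold colPoly repMat
  simp only [map_sum, Finset.sum_mul]
  refine Finset.sum_congr rfl fun l _ => Finset.sum_congr rfl fun a _ => ?_
  split_ifs
  · have : ∀ s, axis z (∑ i, γ i s • MvPolynomial.X i) = Polynomial.C (γ z s) * Polynomial.X := by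
      intro s
      simp [axis, Polynomial.smul_eq_C_mul]
    simp only [map_prod, this, Finset.prod_mul_distrib]
    simp
  · simp

lemma axis_coeff {k : ℕ} (c : Fin k → ℂ) (i : Fin k) :
    (∑ l : Fin k, Polynomial.C (c l) * (Polynomial.X : Polynomial ℂ) ^ (l.val + 1)).coeff
      (i.val + 1) = c i := coeff_gp_succ c i

lemma repMat_one_row {k : ℕ} (z : Fin k) (hz : z.val = 0) :
    repMat k ((1 : Matrix (Fin k) (Fin k) ℂ) z) = 1 := by
  have hgp : gp ((1 : Matrix (Fin k) (Fin k) ℂ) z) = Polynomial.X := by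
    unfold gp
    rw [Finset.sum_eq_single z]
    · simp [hz]
    · intro b _ hb; simp [Matrix.one_apply_ne hb.symm]
    · simp
  ext i j
  rw [repMat_eq, hgp, Polynomial.coeff_X_pow, Matrix.one_apply]
  simp [Fin.ext_iff, eq_comm]

lemma eq_repMat_of {k : ℕ} (z : Fin k) (hz : z.val = 0) (g : Matrix (Fin k) (Fin k) ℂ)
    (h : ∀ j, colPoly g j =
      ∑ i : Fin k, MvPolynomial.C (g i j) * colPoly (1 : Matrix (Fin k) (Fin k) ℂ) i) :
    g = repMat k (g z) := by
  ext i j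
  have h1 := congrArg (axis z) (h j)
  rw [axis_colPoly] at h1
  simp only [map_sum, map_mul, axis_colPoly, repMat_one_row z hz] at h1
  have h2 := congrArg (fun p => Polynomial.coeff p (i.val + 1)) h1
  simp only [axis_coeff] at h2
  rw [h2, Polynomial.finsetSum_coeff]
  have : ∀ x, axis z (MvPolynomial.C (g x j)) = Polynomial.C (g x j) := by
    intro x; simp [axis]
  simp only [this, Polynomial.coeff_C_mul, axis_coeff]
  rw [Finset.sum_eq_single i]
  · simp
  · intro b _ hb; simp [Matrix.one_apply_ne hb.symm]
  · simp

lemma det_repMat (k : ℕ) (hk : 1 ≤ k) (α : Fin k → ℂ) :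
    (repMat k α).det = (α ⟨0, hk⟩) ^ (∑ i ∈ Finset.range k, (i + 1)) := by
  rw [Matrix.det_of_isUpperTriangular]
  · have : ∀ i : Fin k, repMat k α i i = (α ⟨0, hk⟩) ^ (i.val + 1) := by
      intro i
      rw [repMat_eq]
      obtain ⟨r, hr⟩ := X_dvd_gp α
      have h1 := coeff_gp_succ α ⟨0, hk⟩
      rw [hr] at h1 ⊢
      rw [Polynomial.coeff_X_mul] at h1
      rw [mul_pow, Polynomial.coeff_X_pow_mul']
      simp at h1 ⊢
      rw [Polynomial.coeff_zero_eq_eval_zero, Polynomial.eval_pow,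
        ← Polynomial.coeff_zero_eq_eval_zero, h1]
    simp only [this]
    rw [Finset.prod_pow_eq_pow_sum, Finset.sum_range]
  · intro i j hij
    rw [repMat_eq]
    apply coeff_gp_pow_lt
    simp only [id] at hij
    have : j.val < i.val := hij
    omega

lemma colPoly_support {n k : ℕ} (γ : Matrix (Fin n) (Fin k) ℂ) (j : Fin k) (d : Fin n →₀ ℕ)
    (hd : ¬ (0 < ∑ i, d i ∧ ∑ i, d i ≤ k)) : (colPoly γ j).coeff d = 0 := by
  unfold colPoly
  simp only [MvPolynomial.coeff_sum]
  refine Finset.sum_eq_zero fun l _ => Finset.sum_eq_zero fun a _ => ?_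
  split_ifs
  · have hh : (∏ t, (∑ i : Fin n, γ i (a t) • (MvPolynomial.X i : MvPolynomial (Fin n) ℂ))).IsHomogeneous
        (∑ t : Fin (l.val + 1), 1) := by
      apply MvPolynomial.IsHomogeneous.prod
      intro t _
      apply MvPolynomial.IsHomogeneous.sum
      intro i _
      rw [MvPolynomial.smul_eq_C_mul]
      exact (MvPolynomial.isHomogeneous_X ℂ i).C_mul _
    apply hh.coeff_eq_zero
    intro he
    apply hd
    rw [Finsupp.degree_eq_sum] at he
    rw [he]
    simp only [Finset.sum_const, Finset.card_univ, Fintype.card_fin, smul_eq_mul, mul_one]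
    omega
  · simp

/-- linear monomials -/
def linMon {k : ℕ} (hk : 1 ≤ k) (i : Fin k) : Mon k k :=
  ⟨Pi.single i 1, by simp, by simpa using hk⟩

lemma phiMat_lin {k : ℕ} (hk : 1 ≤ k) (γ : Matrix (Fin k) (Fin k) ℂ) (i j : Fin k) :
    phiMat γ (linMon hk i) j = γ i j := by
  have hs : (Finsupp.equivFunOnFinite.symm (linMon hk i).1 : Fin k →₀ ℕ) = Finsupp.single i 1 := by
    ext x; simp [linMon, Finsupp.single_apply, Pi.single_apply, eq_comm]
  unfold phiMat colPoly
  rw [hs]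
  simp only [MvPolynomial.coeff_sum]
  rw [Finset.sum_eq_single (⟨0, hk⟩ : Fin k)]
  · rw [Finset.sum_eq_single (fun _ => j)]
    · simp [MvPolynomial.coeff_sum, MvPolynomial.coeff_X, Finsupp.single_left_inj]
    · intro b _ hb
      rw [if_neg]
      · simp
      intro h
      apply hb
      funext t
      have : t = 0 := Fin.ext (by have := t.isLt; simp only at this; simp)
      subst this
      simp at h
      exact Fin.ext h
    · simp
  · intro l _ hl
    refine Finset.sum_eq_zero fun a _ => ?_
    split_ifs
    · have hh : (∏ t, (∑ i : Fin k, γ i (a t) • (MvPolynomial.X i : MvPolynomial (Fin k) ℂ))).IsHomogeneous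
          (∑ t : Fin (l.val + 1), 1) := by
        apply MvPolynomial.IsHomogeneous.prod
        intro t _
        apply MvPolynomial.IsHomogeneous.sum
        intro i _
        rw [MvPolynomial.smul_eq_C_mul]
        exact (MvPolynomial.isHomogeneous_X ℂ i).C_mul _
      apply hh.coeff_eq_zero
      intro he
      apply hl
      simp at he
      exact Fin.ext he
    · simp
  · simp

lemma poly_eq_sum {n k : ℕ} (P : MvPolynomial (Fin n) ℂ)
    (hP : ∀ d : Fin n →₀ ℕ, ¬ (0 < ∑ i, d i ∧ ∑ i, d i ≤ k) → P.coeff d = 0) :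
    P = ∑ m : Mon n k, MvPolynomial.monomial (Finsupp.equivFunOnFinite.symm m.1)
      (P.coeff (Finsupp.equivFunOnFinite.symm m.1)) := by
  classical
  ext d
  simp only [MvPolynomial.coeff_sum, MvPolynomial.coeff_monomial]
  by_cases hd : 0 < ∑ i, d i ∧ ∑ i, d i ≤ k
  · refine Eq.symm ((Finset.sum_eq_single (⟨d, hd⟩ : Mon n k) ?_ ?_).trans ?_)
    rotate_left 2
    · have : (Finsupp.equivFunOnFinite.symm (⇑d) : Fin n →₀ ℕ) = d := by ext; simp
      simp [this]
    · intro b _ hb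
      rw [if_neg]
      intro h
      apply hb
      apply Subtype.ext
      exact congrArg (fun f : Fin n →₀ ℕ => (f : Fin n → ℕ)) h
    · intro h
      exact absurd (Finset.mem_univ (α := Mon n k) _) h
  · rw [hP d hd, Finset.sum_eq_zero]
    intro m _
    rw [if_neg]
    intro h
    apply hd
    rw [← h]
    exact m.2

lemma symMat_phi {k : ℕ} (g : Matrix (Fin k) (Fin k) ℂ) (m : Mon k k) (j : Fin k) :
    ∑ m' : Mon k k, symMat g m m' * phiMat (1 : Matrix (Fin k) (Fin k) ℂ) m' j = phiMat g m j := by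
  have h1 : MvPolynomial.aeval (col g) (colPoly (1 : Matrix (Fin k) (Fin k) ℂ) j) = colPoly g j := by
    unfold colPoly
    simp only [map_sum]
    refine Finset.sum_congr rfl fun l _ => Finset.sum_congr rfl fun a _ => ?_
    split_ifs
    · rw [map_prod]
      refine Finset.prod_congr rfl fun t _ => ?_
      have := congrFun (col_one (k := k)) (a t)
      unfold col at this
      rw [this, MvPolynomial.aeval_X]; rfl
    · simp
  rw [poly_eq_sum (k := k) (colPoly (1 : Matrix (Fin k) (Fin k) ℂ) j) (colPoly_support _ j), map_sum] at h1
  unfold phiMat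
  rw [← h1, MvPolynomial.coeff_sum]
  refine Finset.sum_congr rfl fun m' _ => ?_
  rw [MvPolynomial.aeval_monomial, MvPolynomial.algebraMap_eq, MvPolynomial.coeff_C_mul, mul_comm]
  congr 1
  unfold symMat
  rw [Finsupp.prod_fintype _ _ (by simp)]
  rfl

lemma wedge_eq_det {n k : ℕ} (v : Fin k → (Mon n k → ℂ)) (mf : Fin k → Mon n k) :
    wedge v mf = (Matrix.of (fun a b => v b (mf a))).det := by
  rw [← Matrix.det_transpose, Matrix.det_apply']
  rfl

lemma actV_pk {k : ℕ} (g : Matrix (Fin k) (Fin k) ℂ) : actV g (pkVec k) = wedgePhi g := by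
  funext mf
  unfold actV pkVec wedgePhi wedge
  simp only [Finset.mul_sum]
  rw [Finset.sum_comm]
  refine Finset.sum_congr rfl fun σ _ => ?_
  simp only [← symMat_phi g]
  rw [Fintype.prod_sum, Finset.mul_sum]
  refine Finset.sum_congr rfl fun x _ => ?_
  rw [Finset.prod_mul_distrib]
  ring

lemma actW_pt {k K : ℕ} (hk : 1 ≤ k) (g : Matrix (Fin k) (Fin k) ℂ)
    (x : (Fin k → Mon k k) × (Fin K → Fin k)) :
    actW g (ptW k K) x = wedgePhi g x.1 * ∏ j, g (x.2 j) ⟨0, hk⟩ := by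
  have h2 : ∏ j, g (x.2 j) ⟨0, hk⟩ = ∏ j, ∑ i, g (x.2 j) i * e1 k i := by
    refine Finset.prod_congr rfl fun j _ => ?_
    rw [Finset.sum_eq_single (⟨0, hk⟩ : Fin k)]
    · simp [e1]
    · intro b _ hb
      have : b.val ≠ 0 := fun h => hb (Fin.ext h)
      simp [e1, this]
    · simp
  rw [← actV_pk, h2, Fintype.prod_sum]
  unfold actW actV ptW
  rw [Finset.sum_mul_sum, Fintype.sum_prod_type]
  refine Finset.sum_congr rfl fun a _ => Finset.sum_congr rfl fun b _ => ?_
  simp only [Finset.prod_mul_distrib]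
  ring

lemma det_lin {k : ℕ} (hk : 1 ≤ k) (γ : Matrix (Fin k) (Fin k) ℂ) :
    wedgePhi γ (linMon hk) = γ.det := by
  unfold wedgePhi
  rw [wedge_eq_det]
  congr 1
  ext a b
  simp [phiMat_lin]

lemma det_update {k : ℕ} (hk : 1 ≤ k) (γ : Matrix (Fin k) (Fin k) ℂ) (m : Mon k k) (i : Fin k) :
    wedgePhi γ (Function.update (linMon hk) i m) =
      Matrix.vecMul (fun j => phiMat γ m j) γ.adjugate i := by
  unfold wedgePhi
  rw [wedge_eq_det]
  have : (Matrix.of (fun a b => phiMat γ (Function.update (linMon hk) i m a) b))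
      = γ.updateRow i (fun j => phiMat γ m j) := by
    ext a b
    by_cases h : a = i
    · subst h; simp
    · simp [h, phiMat_lin]
  rw [this, ← Matrix.cramer_transpose_apply, Matrix.cramer_eq_adjugate_mulVec,
    ← Matrix.adjugate_transpose, Matrix.mulVec_transpose]

lemma colPoly_of_wedge {k : ℕ} (hk : 1 ≤ k) (g : Matrix (Fin k) (Fin k) ℂ) (hg : g.det = 1)
    (h : wedgePhi g = pkVec k) (j : Fin k) :
    colPoly g j =
      ∑ i : Fin k, MvPolynomial.C (g i j) * colPoly (1 : Matrix (Fin k) (Fin k) ℂ) i := by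
  have key : ∀ m : Mon k k, phiMat g m j = ∑ i, g i j * phiMat 1 m i := by
    intro m
    have h1 : Matrix.vecMul (fun j => phiMat g m j) g.adjugate =
        fun j => phiMat (1 : Matrix (Fin k) (Fin k) ℂ) m j := by
      funext i
      have := congrFun h (Function.update (linMon hk) i m)
      rw [pkVec, det_update, det_update] at this
      rw [this]
      simp
    have h2 := congrArg (fun v => Matrix.vecMul v g) h1
    simp only [Matrix.vecMul_vecMul, Matrix.adjugate_mul, hg, one_smul, Matrix.vecMul_one] at h2
    have h3 := congrFun h2 j
    rw [h3, Matrix.vecMul, dotProduct]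
    exact Finset.sum_congr rfl fun i _ => mul_comm _ _
  ext d
  by_cases hd : 0 < ∑ i, d i ∧ ∑ i, d i ≤ k
  · have h4 := key ⟨d, hd⟩
    have : (Finsupp.equivFunOnFinite.symm (⇑d) : Fin k →₀ ℕ) = d := by ext; simp
    simp only [phiMat, this] at h4
    rw [h4, MvPolynomial.coeff_sum]
    simp only [MvPolynomial.coeff_C_mul]
  · rw [colPoly_support _ _ _ hd, MvPolynomial.coeff_sum]
    simp only [MvPolynomial.coeff_C_mul, colPoly_support _ _ _ hd, mul_zero, Finset.sum_const_zero]

lemma wedgePhi_of_colPoly {k : ℕ} (g : Matrix (Fin k) (Fin k) ℂ)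
    (h : ∀ j, colPoly g j =
      ∑ i : Fin k, MvPolynomial.C (g i j) * colPoly (1 : Matrix (Fin k) (Fin k) ℂ) i)
    (mf : Fin k → Mon k k) : wedgePhi g mf = pkVec k mf * g.det := by
  unfold pkVec wedgePhi
  rw [wedge_eq_det, wedge_eq_det, ← Matrix.det_mul]
  congr 1
  ext a b
  rw [Matrix.mul_apply]
  simp only [Matrix.of_apply, phiMat, h b, MvPolynomial.coeff_sum, MvPolynomial.coeff_C_mul]
  exact Finset.sum_congr rfl fun i _ => mul_comm _ _

/-- For `K = M·(1+2+⋯+k) + 1`, the stabiliser of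
`p_k ⊗ e₁^{⊗K}` in `SL(k,ℂ)` is exactly `𝕌_k`. -/
theorem stabiliser_eq_Uk (k : ℕ) (hk : 1 ≤ k) (M K : ℕ)
    (hK : K = M * (∑ i ∈ Finset.range k, (i + 1)) + 1)
    (g : Matrix (Fin k) (Fin k) ℂ) (hg : g.det = 1) :
    actW g (ptW k K) = ptW k K ↔ g ∈ Uset k := by
  constructor
  · intro h
    have h0 : (g ⟨0, hk⟩ ⟨0, hk⟩) ^ K = 1 := by
      have := congrFun h (linMon hk, fun _ => ⟨0, hk⟩)
      rw [actW_pt hk] at this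
      simp only [ptW, pkVec, det_lin] at this
      simpa [hg, e1] using this
    have hw : wedgePhi g = pkVec k := by
      funext mf
      have := congrFun h (mf, fun _ => ⟨0, hk⟩)
      rw [actW_pt hk] at this
      simpa [ptW, h0, e1] using this
    have hrep := eq_repMat_of ⟨0, hk⟩ rfl g (colPoly_of_wedge hk g hg hw)
    refine ⟨g ⟨0, hk⟩, ?_, hrep⟩
    have hdet : (g ⟨0, hk⟩ ⟨0, hk⟩) ^ (∑ i ∈ Finset.range k, (i + 1)) = 1 := by
      rw [← det_repMat, ← hrep, hg]
    rw [hK, pow_succ, mul_comm M, pow_mul, hdet, one_pow, one_mul] at h0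
    intro i hi
    have : i = ⟨0, hk⟩ := Fin.ext hi
    rw [this, h0]
  · rintro ⟨α, hα, rfl⟩
    funext x
    rw [actW_pt hk, wedgePhi_of_colPoly _ (colPoly_repMat α), hg, mul_one]
    unfold ptW
    congr 1
    refine Finset.prod_congr rfl fun j _ => ?_
    rw [repMat_eq]
    unfold e1
    split_ifs with hx
    · rw [hx]
      have := coeff_gp_succ α ⟨0, hk⟩
      simp only [zero_add] at this ⊢
      rw [pow_one, this]
      exact hα _ rfl
    · exact coeff_gp_pow_lt _ (by simp only; omega)

end JetPaper
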